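/- arXiv:1604.02597 — 3 statements merged into one kernel-verified Lean document; each statement's English description precedes it below -/
import Mathlib

section
/- For every k ≥ 1, b^(k(k+1)/2) < h k < b^(k(k+1)/2 + 1). -/
open MeasureTheory Filter Topology
open scoped ENNReal

/-- `m`-fold concatenation of a word. -/
def wordPow (w : List ℕ) (m : ℕ) : List ℕ := (List.replicate m w).flatten

/-- The words of the generalized del Junco–Rudolph construction:
`B 0 = [0]`, `B (k+1) = (B k)^(a·b^k) ++ [1] ++ (B k)^((b-a)·b^k)`. -/
def Bword (b a : ℕ) : ℕ → List ℕ
  | 0 => [0]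
  | k + 1 => wordPow (Bword b a k) (a * b ^ k) ++ [1] ++ wordPow (Bword b a k) ((b - a) * b ^ k)

/-- The height sequence: `h 0 = 1`, `h (k+1) = b^(k+1) * h k + 1`. -/
def hseq (b : ℕ) : ℕ → ℕ
  | 0 => 1
  | k + 1 => b ^ (k + 1) * hseq b k + 1

theorem pow_triangle_succ {M : Type*} [Monoid M] (x : M) (k : ℕ) :
    x ^ ((k + 1) * (k + 1 + 1) / 2) = x ^ (k + 1) * x ^ (k * (k + 1) / 2) := by
  have triangle_succ : (k + 1) * (k + 1 + 1) / 2 = (k + 1) + k * (k + 1) / 2 := by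
    simpa [mul_comm, add_comm] using Nat.triangle_succ (k + 1)
  rw [triangle_succ, pow_add]

theorem pow_triangle_succ_lt_hseq_succ {b k : ℕ} (h : b ^ (k * (k + 1) / 2) ≤ hseq b k) :
    b ^ ((k + 1) * (k + 1 + 1) / 2) < hseq b (k + 1) :=
  calc b ^ ((k + 1) * (k + 1 + 1) / 2)
    _ = b ^ (k + 1) * b ^ (k * (k + 1) / 2) := pow_triangle_succ b k
    _ ≤ b ^ (k + 1) * hseq b k := by gcongr
    _ < hseq b (k + 1) := Nat.lt_succ_self _

theorem pow_triangle_le_hseq (b k : ℕ) : b ^ (k * (k + 1) / 2) ≤ hseq b k := by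
  induction k with
  | zero => simp [hseq]
  | succ k ih => exact (pow_triangle_succ_lt_hseq_succ ih).le

theorem pow_triangle_lt_hseq (b : ℕ) {k : ℕ} (hk : k ≠ 0) :
    b ^ (k * (k + 1) / 2) < hseq b k := by
  obtain ⟨k, rfl⟩ := Nat.exists_eq_succ_of_ne_zero hk
  exact pow_triangle_succ_lt_hseq_succ (pow_triangle_le_hseq b k)

theorem hseq_lt_pow_triangle_add_one {b : ℕ} (hb : 1 < b) (k : ℕ) :
    hseq b k < b ^ (k * (k + 1) / 2 + 1) := by
  induction k with
  | zero => simpa [hseq] using hb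
  | succ k ih =>
    -- Strictness at `k` leaves a spare summand `b ^ (k + 1)`, which absorbs the `+ 1`.
    calc hseq b (k + 1)
      _ = b ^ (k + 1) * hseq b k + 1 := rfl
      _ < b ^ (k + 1) * hseq b k + b ^ (k + 1) := by
        gcongr
        exact Nat.one_lt_pow k.succ_ne_zero hb
      _ = b ^ (k + 1) * (hseq b k + 1) := by ring
      _ ≤ b ^ (k + 1) * b ^ (k * (k + 1) / 2 + 1) := by
        gcongr
        exact ih
      _ = b ^ ((k + 1) * (k + 1 + 1) / 2 + 1) := by
        rw [pow_succ _ (k * (k + 1) / 2), ← mul_assoc, ← pow_triangle_succ, ← pow_succ]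

/-- for every `k ≥ 1`, `b^(k(k+1)/2) < h k < b^(k(k+1)/2 + 1)`. -/
theorem hseq_bounds (b : ℕ) (hb : 2 ≤ b) (k : ℕ) (hk : 1 ≤ k) :
    b ^ (k * (k + 1) / 2) < hseq b k ∧ hseq b k < b ^ (k * (k + 1) / 2 + 1) :=
  ⟨pow_triangle_lt_hseq b (Nat.one_le_iff_ne_zero.mp hk), hseq_lt_pow_triangle_add_one hb k⟩
end

section
/- Let k ≥ 2 and let x ∈ X. If for some m ∈ ℤ the block x_m x_{m+1} … x_{m+2·h k} equals the word B k ++ [1] ++ B k, then the block x_{m−h k} … x_{m−1} equals B k and the block x_{m+2·h k+1} … x_{m+3·h k} equals B k. -/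
open MeasureTheory Filter Topology
open scoped ENNReal

/-- The word `w` occurs in the word `v` at position `p` (0-based). -/
def OccursAt (w v : List ℕ) (p : ℕ) : Prop :=
  p + w.length ≤ v.length ∧ (v.drop p).take w.length = w

/-- The block of `x` of length `w.length` starting at index `m` equals the word `w`. -/
def BlockEq (x : ℤ → ℕ) (m : ℤ) (w : List ℕ) : Prop :=
  ∀ i : ℕ, i < w.length → x (m + i) = w.getD i 0

/-- Membership in the subshift `X`: every finite block of `x` occurs as a consecutive
subword of some `B k`. -/
def InX (b a : ℕ) (x : ℤ → ℕ) : Prop :=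
  ∀ (m : ℤ) (l : ℕ), ∃ k p, OccursAt (List.ofFn fun i : Fin l => x (m + (i : ℕ))) (Bword b a k) p

/-!
`B n` is a concatenation of copies of `B k` separated by at most one spacer `1`. Call an occurrence
of `B k` in `B n` expected if it arises by unfolding the recursion from `B n` down to level `k`, and
say that a spacer has order at least `k` if it is the central `1` of an expected `B (j + 1)` with
`j ≥ k`. For `k ≥ 1` such a spacer is surrounded by `B k B k 1 B k B k`, so it suffices to show that
the middle `1` of every occurrence of `B k 1 B k` in `B n` has order at least `k`.

This goes by induction on `k`. In an occurrence of `B (k + 1) 1 B (k + 1)`, the central `1` of the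
left `B (k + 1)` has order at least `k`. If it had order at least `k + 1`, it would be followed by
`B (k + 1) B (k + 1)`, whose second copy starts with `0` exactly where the central `1` of the right
`B (k + 1)` sits. Hence the left `B (k + 1)` is expected, and a `1` following an expected
`B (k + 1)` has order at least `k + 1`.
-/

section Occurrences

variable {u v w : List ℕ} {p q i : ℕ}

theorem occursAt_iff_exists_append :
    OccursAt w v p ↔ ∃ s t, s.length = p ∧ s ++ w ++ t = v := by
  constructor
  · rintro ⟨hle, heq⟩
    refine ⟨v.take p, (v.drop p).drop w.length, by rw [List.length_take]; omega, ?_⟩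
    calc v.take p ++ w ++ (v.drop p).drop w.length
        = v.take p ++ ((v.drop p).take w.length ++ (v.drop p).drop w.length) := by
          rw [heq, List.append_assoc]
      _ = v := by rw [List.take_append_drop, List.take_append_drop]
  · rintro ⟨s, t, rfl, rfl⟩
    refine ⟨by simp only [List.length_append]; omega, ?_⟩
    rw [List.append_assoc, List.drop_left, List.take_left]

theorem occursAt_of_prefix (h : w <+: v) : OccursAt w v 0 :=
  h.elim fun t ht => occursAt_iff_exists_append.2 ⟨[], t, rfl, ht⟩

theorem occursAt_append_right (u w : List ℕ) : OccursAt w (u ++ w) u.length :=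
  occursAt_iff_exists_append.2 ⟨u, [], rfl, List.append_nil _⟩

theorem OccursAt.trans (huv : OccursAt u v p) (hvw : OccursAt v w q) : OccursAt u w (q + p) := by
  obtain ⟨s, t, rfl, rfl⟩ := occursAt_iff_exists_append.1 huv
  obtain ⟨s', t', rfl, rfl⟩ := occursAt_iff_exists_append.1 hvw
  exact occursAt_iff_exists_append.2
    ⟨s' ++ s, t ++ t', List.length_append, by simp only [List.append_assoc]⟩

theorem OccursAt.getElem?_add (h : OccursAt w v p) (hi : i < w.length) : v[p + i]? = w[i]? := by
  rw [← List.getElem?_drop, ← List.getElem?_take_of_lt hi, h.2]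

theorem occursAt_of_getElem? (hle : p + w.length ≤ v.length)
    (h : ∀ i < w.length, v[p + i]? = w[i]?) : OccursAt w v p := by
  refine ⟨hle, List.ext_getElem? fun i => ?_⟩
  by_cases hi : i < w.length
  · rw [List.getElem?_take_of_lt hi, List.getElem?_drop, h i hi]
  · rw [List.getElem?_eq_none (by rw [List.length_take]; omega), List.getElem?_eq_none (by omega)]

theorem OccursAt.of_append_left (h : OccursAt (u ++ w) v p) : OccursAt u v p :=
  (occursAt_of_prefix (List.prefix_append u w)).trans h

theorem OccursAt.of_append_right (h : OccursAt (u ++ w) v p) : OccursAt w v (p + u.length) :=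
  (occursAt_append_right u w).trans h

theorem OccursAt.of_occursAt (hv : OccursAt v u q) (hw : OccursAt w u (q + p))
    (hle : p + w.length ≤ v.length) : OccursAt w v p :=
  occursAt_of_getElem? hle fun i hi => by
    rw [← hv.getElem?_add (by omega), ← add_assoc, hw.getElem?_add hi]

theorem OccursAt.trim {c : ℕ} {u' w' : List ℕ} (h : OccursAt (u ++ [c] ++ w) v p)
    (hu : u' <:+ u) (hw : w' <+: w) :
    ∃ q, q + u'.length = p + u.length ∧ OccursAt (u' ++ [c] ++ w') v q := by
  obtain ⟨s, rfl⟩ := hu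
  obtain ⟨t, rfl⟩ := hw
  have hmid : OccursAt (u' ++ [c] ++ w') (s ++ u' ++ [c] ++ (w' ++ t)) s.length :=
    occursAt_iff_exists_append.2 ⟨s, t, rfl, by simp only [List.append_assoc]⟩
  exact ⟨p + s.length, by rw [List.length_append, add_assoc], hmid.trans h⟩

theorem occursAt_ofFn_iff {x : ℤ → ℕ} {m : ℤ} {l : ℕ} (hle : p + w.length ≤ l) :
    OccursAt w (List.ofFn fun i : Fin l => x (m + (i : ℕ))) p ↔ BlockEq x (m + p) w := by
  have hget : ∀ i < w.length, ((List.ofFn fun i : Fin l => x (m + (i : ℕ)))[p + i]? = w[i]? ↔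
      x (m + p + i) = w.getD i 0) := fun i hi => by
    rw [List.getElem?_eq_getElem (by rw [List.length_ofFn]; omega), List.getElem_ofFn,
      List.getElem?_eq_getElem hi, List.getD_eq_getElem _ _ hi, Option.some_inj, Nat.cast_add,
      add_assoc]
  exact ⟨fun h i hi => (hget i hi).1 (h.getElem?_add hi), fun h =>
    occursAt_of_getElem? (by rwa [List.length_ofFn]) fun i hi => (hget i hi).2 (h i hi)⟩

end Occurrences

section Powers

variable {w : List ℕ} {m n i : ℕ}

theorem length_wordPow (w : List ℕ) (m : ℕ) : (wordPow w m).length = m * w.length := by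
  simp only [wordPow, List.length_flatten, List.map_replicate, List.sum_replicate, smul_eq_mul]

theorem wordPow_one (w : List ℕ) : wordPow w 1 = w := List.append_nil w

theorem wordPow_add (w : List ℕ) (m n : ℕ) : wordPow w (m + n) = wordPow w m ++ wordPow w n := by
  rw [wordPow, List.replicate_add, List.flatten_append, wordPow, wordPow]

theorem wordPow_prefix_wordPow (h : m ≤ n) : wordPow w m <+: wordPow w n := by
  obtain ⟨d, rfl⟩ := Nat.exists_eq_add_of_le h
  exact ⟨wordPow w d, (wordPow_add w m d).symm⟩

theorem wordPow_suffix_wordPow (h : m ≤ n) : wordPow w m <:+ wordPow w n := by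
  obtain ⟨d, rfl⟩ := Nat.exists_eq_add_of_le' h
  exact ⟨wordPow w d, (wordPow_add w d m).symm⟩

theorem prefix_wordPow (h : 0 < m) : w <+: wordPow w m := by
  simpa only [wordPow_one] using wordPow_prefix_wordPow (w := w) h

theorem suffix_wordPow (h : 0 < m) : w <:+ wordPow w m := by
  simpa only [wordPow_one] using wordPow_suffix_wordPow (w := w) h

theorem occursAt_wordPow (h : i < m) : OccursAt w (wordPow w m) (i * w.length) := by
  obtain ⟨d, rfl⟩ := Nat.exists_eq_add_of_lt h
  refine occursAt_iff_exists_append.2 ⟨wordPow w i, wordPow w d, length_wordPow w i, ?_⟩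
  rw [add_right_comm, wordPow_add, wordPow_add, wordPow_one]

end Powers

section Blocks

variable {b a j k p : ℕ}

theorem length_Bword (hab : a ≤ b) (k : ℕ) : (Bword b a k).length = hseq b k := by
  induction k with
  | zero => rfl
  | succ k ih =>
    obtain ⟨c, rfl⟩ := Nat.exists_eq_add_of_le hab
    simp only [Bword, hseq, List.length_append, length_wordPow, List.length_singleton, ih,
      Nat.add_sub_cancel_left]
    ring

theorem prefix_Bword_succ : wordPow (Bword b a k) (a * b ^ k) <+: Bword b a (k + 1) := by
  rw [Bword, List.append_assoc]
  exact List.prefix_append _ _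

theorem suffix_Bword_succ : wordPow (Bword b a k) ((b - a) * b ^ k) <:+ Bword b a (k + 1) :=
  List.suffix_append _ _

theorem getElem?_Bword_zero (ha : 0 < a) (hb : 0 < b) (k : ℕ) : (Bword b a k)[0]? = some 0 := by
  induction k with
  | zero => rfl
  | succ k ih =>
    have hpre : Bword b a k <+: Bword b a (k + 1) :=
      (prefix_wordPow (by positivity)).trans prefix_Bword_succ
    exact ((occursAt_of_prefix hpre).getElem?_add (List.getElem?_eq_some_iff.1 ih).1).trans ih

theorem length_Bword_pos (ha : 0 < a) (hb : 0 < b) (k : ℕ) : 0 < (Bword b a k).length :=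
  (List.getElem?_eq_some_iff.1 (getElem?_Bword_zero ha hb k)).1

theorem OccursAt.getElem?_eq_some_zero {v : List ℕ} (ha : 0 < a) (hb : 0 < b)
    (h : OccursAt (Bword b a k) v p) : v[p]? = some 0 :=
  (h.getElem?_add (length_Bword_pos ha hb k)).trans (getElem?_Bword_zero ha hb k)

theorem wordPow_Bword_prefix (ha : 0 < a) (hb : 0 < b) (hkj : k ≤ j) {c : ℕ} (hc : 0 < c) :
    wordPow (Bword b a k) (b ^ k) <+: wordPow (Bword b a j) (c * b ^ j) := by
  induction j, hkj using Nat.le_induction generalizing c with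
  | base => exact wordPow_prefix_wordPow (Nat.le_mul_of_pos_left _ hc)
  | succ j _ ih => exact ((ih ha).trans prefix_Bword_succ).trans (prefix_wordPow (by positivity))

theorem wordPow_Bword_suffix (hab : a < b) (hkj : k ≤ j) {c : ℕ} (hc : 0 < c) :
    wordPow (Bword b a k) (b ^ k) <:+ wordPow (Bword b a j) (c * b ^ j) := by
  have hb : 0 < b := by omega
  induction j, hkj using Nat.le_induction generalizing c with
  | base => exact wordPow_suffix_wordPow (Nat.le_mul_of_pos_left _ hc)
  | succ j _ ih =>
    exact ((ih (Nat.sub_pos_of_lt hab)).trans suffix_Bword_succ).trans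
      (suffix_wordPow (by positivity))

end Blocks

section Spacers

/-- The position of the spacer `1` that the recursion inserts in `B (n + 1)`. -/
def centre (b a n : ℕ) : ℕ := a * b ^ n * (Bword b a n).length

/-- The starting positions of the copies of `B n` from which `B (n + 1)` is concatenated. -/
inductive IsCopyStart (b a n : ℕ) : ℕ → Prop
  | left (i : ℕ) : i < a * b ^ n → IsCopyStart b a n (i * (Bword b a n).length)
  | right (i : ℕ) : i < (b - a) * b ^ n →
      IsCopyStart b a n (centre b a n + 1 + i * (Bword b a n).length)

/-- `ExpectedAt b a k n p`: unfolding the recursion from `B n` down to level `k` produces a copy of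
`B k` at position `p` of `B n`. Not every occurrence of `B k` in `B n` is of this kind. -/
inductive ExpectedAt (b a k : ℕ) : ℕ → ℕ → Prop
  | refl : ExpectedAt b a k k 0
  | step {n s p : ℕ} :
      IsCopyStart b a n s → ExpectedAt b a k n p → ExpectedAt b a k (n + 1) (s + p)

/-- `IsSpacer b a k n S`: position `S` of `B n` is a spacer of order at least `k`, that is, the
central `1` of an expected `B (j + 1)` for some `j ≥ k`. -/
def IsSpacer (b a k n S : ℕ) : Prop :=
  ∃ j p, k ≤ j ∧ ExpectedAt b a (j + 1) n p ∧ S = p + centre b a j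

variable {b a k n p s S : ℕ}

theorem length_wordPow_eq_centre (b a n : ℕ) :
    (wordPow (Bword b a n) (a * b ^ n)).length = centre b a n :=
  length_wordPow _ _

theorem length_Bword_succ (b a n : ℕ) : (Bword b a (n + 1)).length =
    centre b a n + 1 + (b - a) * b ^ n * (Bword b a n).length := by
  rw [Bword, List.length_append, List.length_append, length_wordPow_eq_centre, length_wordPow,
    List.length_singleton]

theorem getElem?_centre (b a n : ℕ) : (Bword b a (n + 1))[centre b a n]? = some 1 := by
  rw [← length_wordPow_eq_centre, Bword, List.getElem?_append_left (by simp),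
    List.getElem?_concat_length]

theorem OccursAt.getElem?_add_centre {v : List ℕ} (h : OccursAt (Bword b a (n + 1)) v p) :
    v[p + centre b a n]? = some 1 :=
  (h.getElem?_add (List.getElem?_eq_some_iff.1 (getElem?_centre b a n)).1).trans
    (getElem?_centre b a n)

theorem eq_centre_or_exists_isCopyStart (hS : S < (Bword b a (n + 1)).length) :
    S = centre b a n ∨ ∃ s r, IsCopyStart b a n s ∧ r < (Bword b a n).length ∧ S = s + r := by
  have copy_and_offset : ∀ {N T : ℕ}, T < N * (Bword b a n).length →
      ∃ i < N, ∃ r < (Bword b a n).length, T = i * (Bword b a n).length + r := fun hT =>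
    ⟨_, Nat.div_lt_of_lt_mul (hT.trans_eq (mul_comm _ _)), _,
      Nat.mod_lt _ (Nat.pos_of_lt_mul_left hT), (Nat.div_add_mod' _ _).symm⟩
  rw [length_Bword_succ] at hS
  rcases lt_trichotomy S (centre b a n) with hlt | heq | hgt
  · obtain ⟨i, hi, r, hr, rfl⟩ := copy_and_offset hlt
    exact Or.inr ⟨_, r, .left i hi, hr, rfl⟩
  · exact Or.inl heq
  · obtain ⟨T, rfl⟩ := Nat.exists_eq_add_of_le (Nat.succ_le_of_lt hgt)
    obtain ⟨i, hi, r, hr, rfl⟩ := copy_and_offset (lt_of_add_lt_add_left hS)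
    exact Or.inr ⟨_, r, .right i hi, hr, (add_assoc _ _ _).symm⟩

namespace IsCopyStart

theorem occursAt (hs : IsCopyStart b a n s) : OccursAt (Bword b a n) (Bword b a (n + 1)) s := by
  cases hs with
  | left i hi =>
    have hcopy := (occursAt_wordPow hi).trans (occursAt_of_prefix prefix_Bword_succ)
    rwa [zero_add] at hcopy
  | right i hi =>
    have hcopy := (occursAt_wordPow hi).trans (occursAt_append_right
      (wordPow (Bword b a n) (a * b ^ n) ++ [1]) (wordPow (Bword b a n) ((b - a) * b ^ n)))
    rwa [List.length_append, length_wordPow_eq_centre] at hcopy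

theorem add_length (hs : IsCopyStart b a n s) :
    s + (Bword b a n).length = (Bword b a (n + 1)).length ∨
      s + (Bword b a n).length = centre b a n ∨
      IsCopyStart b a n (s + (Bword b a n).length) := by
  cases hs with
  | left i hi =>
    rw [← Nat.succ_mul]
    rcases (Nat.succ_le_of_lt hi).eq_or_lt with heq | hlt
    · exact Or.inr (Or.inl (by rw [heq, centre]))
    · exact Or.inr (Or.inr (.left _ hlt))
  | right i hi =>
    rw [add_assoc, ← Nat.succ_mul]
    rcases (Nat.succ_le_of_lt hi).eq_or_lt with heq | hlt
    · exact Or.inl (by rw [heq, length_Bword_succ])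
    · exact Or.inr (Or.inr (.right _ hlt))

end IsCopyStart

namespace ExpectedAt

theorem le (h : ExpectedAt b a k n p) : k ≤ n := by
  induction h with
  | refl => exact le_rfl
  | step _ _ ih => exact Nat.le_succ_of_le ih

theorem occursAt (h : ExpectedAt b a k n p) : OccursAt (Bword b a k) (Bword b a n) p := by
  induction h with
  | refl => exact occursAt_of_prefix List.prefix_rfl
  | step hs _ ih => exact ih.trans hs.occursAt

end ExpectedAt

theorem isSpacer_centre (hkn : k ≤ n) : IsSpacer b a k (n + 1) (centre b a n) :=
  ⟨n, 0, hkn, .refl, (zero_add _).symm⟩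

theorem IsSpacer.of_copy (hs : IsCopyStart b a n s) (h : IsSpacer b a k n S) :
    IsSpacer b a k (n + 1) (s + S) := by
  obtain ⟨j, p, hkj, hp, rfl⟩ := h
  exact ⟨j, s + p, hkj, .step hs hp, (add_assoc _ _ _).symm⟩

theorem isSpacer_zero_of_getElem? (h : (Bword b a n)[S]? = some 1) : IsSpacer b a 0 n S := by
  induction n generalizing S with
  | zero => cases S <;> simp [Bword] at h
  | succ n ih =>
    rcases eq_centre_or_exists_isCopyStart (List.getElem?_eq_some_iff.1 h).1 with
      rfl | ⟨s, r, hs, hr, rfl⟩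
    · exact isSpacer_centre n.zero_le
    · rw [hs.occursAt.getElem?_add hr] at h
      exact (ih h).of_copy hs

theorem ExpectedAt.isSpacer_add_length (ha : 0 < a) (hb : 0 < b) (hp : ExpectedAt b a k n p)
    (h : (Bword b a n)[p + (Bword b a k).length]? = some 1) :
    IsSpacer b a k n (p + (Bword b a k).length) := by
  have not_past_end {n q : ℕ} (hq : (Bword b a n)[q]? = some 1) : q ≠ (Bword b a n).length :=
    (List.getElem?_eq_some_iff.1 hq).1.ne
  induction hp with
  | refl => exact absurd (zero_add _) (not_past_end h)
  | @step n s p hs hp ih =>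
    rw [add_assoc] at h ⊢
    rcases hp.occursAt.1.lt_or_eq with hlt | heq
    · rw [hs.occursAt.getElem?_add hlt] at h
      exact (ih h).of_copy hs
    · rw [heq] at h ⊢
      rcases hs.add_length with hend | hcentre | hcopy
      · exact absurd hend (not_past_end h)
      · exact hcentre ▸ isSpacer_centre hp.le
      · rw [hcopy.occursAt.getElem?_eq_some_zero ha hb] at h
        contradiction

theorem IsSpacer.flanks (ha : 0 < a) (hab : a < b) (hk : 1 ≤ k) (h : IsSpacer b a k n S) :
    ∃ p, p + 2 * (Bword b a k).length = S ∧ OccursAt (Bword b a k) (Bword b a n) p ∧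
      OccursAt (Bword b a k) (Bword b a n) (S + 1 + (Bword b a k).length) := by
  obtain ⟨j, q, hkj, hq, rfl⟩ := h
  have two_le : 2 ≤ b ^ k := (show 2 ≤ b by omega).trans (Nat.le_self_pow (by omega) b)
  obtain ⟨p, hp, hocc⟩ := hq.occursAt.trim
    ((wordPow_suffix_wordPow two_le).trans (wordPow_Bword_suffix hab hkj ha))
    ((wordPow_prefix_wordPow two_le).trans
      (wordPow_Bword_prefix ha (by omega) hkj (Nat.sub_pos_of_lt hab)))
  rw [length_wordPow, length_wordPow_eq_centre] at hp
  have two_copies : wordPow (Bword b a k) 2 = Bword b a k ++ Bword b a k := by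
    rw [wordPow_add _ 1 1, wordPow_one]
  rw [two_copies] at hocc
  refine ⟨p, hp, hocc.of_append_left.of_append_left.of_append_left, ?_⟩
  have hright := hocc.of_append_right.of_append_right
  rwa [List.length_append, List.length_append, ← two_mul, ← add_assoc, hp] at hright

theorem isSpacer_of_occursAt (ha : 0 < a) (hab : a < b)
    (h : OccursAt (Bword b a k ++ [1] ++ Bword b a k) (Bword b a n) p) :
    IsSpacer b a k n (p + (Bword b a k).length) := by
  have hb : 0 < b := by omega
  induction k generalizing p with
  | zero => exact isSpacer_zero_of_getElem? (h.of_append_left.of_append_right.getElem?_add one_pos)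
  | succ k ih =>
    have hleft := h.of_append_left.of_append_left
    have hmiddle := h.of_append_left.of_append_right.getElem?_add one_pos
    have hc : 0 < b - a := Nat.sub_pos_of_lt hab
    obtain ⟨q, hq, hocc⟩ := hleft.trim (suffix_wordPow (w := Bword b a k) (by positivity))
      (prefix_wordPow (w := Bword b a k) (by positivity))
    obtain ⟨j, p', hkj, hp', heq⟩ := ih hocc
    rw [hq, length_wordPow_eq_centre] at heq
    rcases hkj.eq_or_lt with rfl | hlt
    · obtain rfl : p = p' := Nat.add_right_cancel heq
      exact hp'.isSpacer_add_length ha hb hmiddle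
    · have hspacer : IsSpacer b a (k + 1) n (p + centre b a k) := ⟨j, p', hlt, hp', heq⟩
      obtain ⟨-, -, -, hflank⟩ := hspacer.flanks ha hab k.succ_pos
      have read_zero := hflank.getElem?_eq_some_zero ha hb
      have read_one := h.of_append_right.getElem?_add_centre
      have same_position : p + (Bword b a (k + 1) ++ [1]).length + centre b a k =
          p + centre b a k + 1 + (Bword b a (k + 1)).length := by
        rw [List.length_append, List.length_singleton]
        ring
      rw [same_position, read_zero] at read_one
      contradiction

end Spacers

theorem flank_blocks_general {b a : ℕ} (ha : 0 < a) (hab : a < b) {k : ℕ} (hk : 1 ≤ k)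
    {x : ℤ → ℕ} (hx : InX b a x) {m : ℤ}
    (h : BlockEq x m (Bword b a k ++ [1] ++ Bword b a k)) :
    BlockEq x (m - (hseq b k : ℤ)) (Bword b a k) ∧
    BlockEq x (m + 2 * (hseq b k : ℤ) + 1) (Bword b a k) := by
  have hlen := length_Bword hab.le k
  obtain ⟨n, p, hwindow⟩ := hx (m - hseq b k) (4 * hseq b k + 1)
  have hblock := (occursAt_ofFn_iff (l := 4 * hseq b k + 1) (p := hseq b k) (by
    simp only [List.length_append, List.length_singleton]; omega)).2
    ((sub_add_cancel m (hseq b k : ℤ)).symm ▸ h)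
  obtain ⟨p', hp', hleft, hright⟩ :=
    (isSpacer_of_occursAt ha hab (hblock.trans hwindow)).flanks ha hab hk
  obtain rfl : p' = p := by omega
  have transfer {c : ℕ} (hc : c ≤ 3 * hseq b k + 1)
      (hocc : OccursAt (Bword b a k) (Bword b a n) (p' + c)) :
      BlockEq x (m - hseq b k + c) (Bword b a k) :=
    (occursAt_ofFn_iff (by omega)).1
      (hwindow.of_occursAt hocc (by rw [List.length_ofFn]; omega))
  constructor
  · simpa using transfer (c := 0) (by omega) hleft
  · convert transfer (c := 3 * hseq b k + 1) le_rfl (by convert hright using 1; omega) using 1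
    push_cast
    ring

/-- if `x ∈ X` contains the block `B k 1 B k` starting at `m` (`k ≥ 2`), then
the blocks of length `h k` immediately to the left and to the right are both `B k`. -/
theorem flank_blocks (b a : ℕ) (hb : 2 ≤ b) (ha1 : 1 ≤ a) (ha2 : a ≤ b - 1)
    (k : ℕ) (hk : 2 ≤ k) (x : ℤ → ℕ) (hx : InX b a x) (m : ℤ)
    (h : BlockEq x m (Bword b a k ++ [1] ++ Bword b a k)) :
    BlockEq x (m - (hseq b k : ℤ)) (Bword b a k) ∧
    BlockEq x (m + 2 * (hseq b k : ℤ) + 1) (Bword b a k) := by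
  exact flank_blocks_general (by omega) (by omega) (by omega) hx h
end

section
/- The subshift (X, σ) is minimal: for every x ∈ X, the two-sided orbit { σ^n x : n ∈ ℤ } is dense in X (equivalently, X has no nonempty proper closed σ-invariant subset). -/
/-!
For `k ≤ n` the word `B n` is a concatenation of copies of `B k` separated by gaps of length at
most one, because this property of a pair of words is transitive and holds for consecutive `k`.
So every sufficiently long subword of any `B n` contains `B k`. Hence a block of a point `y ∈ X`,
being a subword of some `B k`, occurs in every sufficiently long block of any `x ∈ X`, which is
density of the orbit of `x`.
-/

open MeasureTheory Filter Topology
open scoped ENNReal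

/-- The left shift `(σ x) n = x (n+1)` on `{0,1}^ℤ`. -/
def shiftMap (x : ℤ → ℕ) : ℤ → ℕ := fun n => x (n + 1)

section Subshift

variable {α : Type*}

/-- The word `x m, …, x (m + l - 1)` read off a bi-infinite sequence `x`. -/
def blockAt (x : ℤ → α) (m : ℤ) (l : ℕ) : List α := List.ofFn fun i : Fin l => x (m + (i : ℕ))

/-- The subshift generated by a set of words: the bi-infinite sequences all of whose blocks are
subwords of words in the set. -/
def subshiftOf (L : Set (List α)) : Set (ℤ → α) := {x | ∀ m l, ∃ v ∈ L, blockAt x m l <:+: v}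

/-- Uniform recurrence of a set of words `L`: each word of `L` occurs in every sufficiently long
subword of a word of `L`. -/
def IsUniformlyRecurrent (L : Set (List α)) : Prop :=
  ∀ w ∈ L, ∃ N, ∀ v ∈ L, ∀ u, u <:+: v → N ≤ u.length → w <:+: u

@[simp]
theorem length_blockAt (x : ℤ → α) (m : ℤ) (l : ℕ) : (blockAt x m l).length = l :=
  List.length_ofFn

theorem blockAt_eq_blockAt_iff {x y : ℤ → α} {m n : ℤ} {l : ℕ} :
    blockAt x m l = blockAt y n l ↔ ∀ i < l, x (m + (i : ℕ)) = y (n + (i : ℕ)) := by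
  rw [blockAt, blockAt, List.ofFn_inj, funext_iff, Fin.forall_iff]

theorem exists_blockAt_eq_of_infix {x : ℤ → α} {m : ℤ} {l : ℕ} {u : List α}
    (hu : u <:+: blockAt x m l) : ∃ n, blockAt x n u.length = u := by
  obtain ⟨k, -, hk⟩ := List.infix_iff_getElem?.mp hu
  refine ⟨m + k, List.ext_getElem (length_blockAt ..) fun i _ hi => ?_⟩
  obtain ⟨_, hget⟩ := List.getElem?_eq_some_iff.mp (hk i hi)
  simpa [blockAt, add_assoc, add_comm] using hget

theorem mem_closure_orbit_of_forall_exists_blockAt_eq [TopologicalSpace α] {x y : ℤ → α}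
    (h : ∀ m l, ∃ n, blockAt x n l = blockAt y m l) :
    y ∈ closure {z | ∃ n : ℤ, z = fun m => x (m + n)} := by
  rw [mem_closure_iff_nhds]
  intro t ht
  rw [nhds_pi, Filter.mem_pi] at ht
  obtain ⟨I, hI, s, hs, hst⟩ := ht
  obtain ⟨m, hm⟩ := hI.bddBelow
  obtain ⟨M, hM⟩ := hI.bddAbove
  obtain ⟨n, hn⟩ := h m (M - m + 1).toNat
  have hxy : ∀ i ∈ I, x (i + (n - m)) = y i := by
    intro i hi
    have hmi : m ≤ i := hm hi
    have hiM : i ≤ M := hM hi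
    have := blockAt_eq_blockAt_iff.mp hn (i - m).toNat (by omega)
    rw [Int.toNat_of_nonneg (by omega)] at this
    convert this using 2 <;> ring
  exact ⟨_, hst fun i hi => (hxy i hi).symm ▸ mem_of_mem_nhds (hs i), n - m, rfl⟩

theorem IsUniformlyRecurrent.mem_closure_orbit [TopologicalSpace α] {L : Set (List α)}
    (hL : IsUniformlyRecurrent L) {x y : ℤ → α} (hx : x ∈ subshiftOf L) (hy : y ∈ subshiftOf L) :
    y ∈ closure {z | ∃ n : ℤ, z = fun m => x (m + n)} := by
  refine mem_closure_orbit_of_forall_exists_blockAt_eq fun m l => ?_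
  obtain ⟨w, hw, hyw⟩ := hy m l
  obtain ⟨N, hN⟩ := hL w hw
  obtain ⟨v, hv, hxv⟩ := hx 0 N
  have hwx : w <:+: blockAt x 0 N := hN v hv _ hxv (length_blockAt ..).ge
  simpa using exists_blockAt_eq_of_infix (hyw.trans hwx)

end Subshift

section SpacedConcat

variable {α : Type*} {c : ℕ} {s u v w : List α}

/-- `IsSpacedConcat c w v`: the word `v` consists of one or more copies of `w`, successive copies
being separated by an arbitrary word of length at most `c`. -/
inductive IsSpacedConcat (c : ℕ) (w : List α) : List α → Prop
  | refl : IsSpacedConcat c w w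
  | cons {s v : List α} :
      s.length ≤ c → IsSpacedConcat c w v → IsSpacedConcat c w (w ++ (s ++ v))

namespace IsSpacedConcat

theorem append_spacer_append (hu : IsSpacedConcat c w u) (hs : s.length ≤ c)
    (hv : IsSpacedConcat c w v) : IsSpacedConcat c w (u ++ (s ++ v)) := by
  induction hu with
  | refl => exact cons hs hv
  | cons hr _ ih => simpa only [List.append_assoc] using cons hr ih

theorem trans (hwu : IsSpacedConcat c w u) (huv : IsSpacedConcat c u v) :
    IsSpacedConcat c w v := by
  induction huv with
  | refl => exact hwu
  | cons hs _ ih => exact hwu.append_spacer_append hs ih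

instance : Std.Refl (IsSpacedConcat (α := α) c) := ⟨fun _ => refl⟩

instance : IsTrans (List α) (IsSpacedConcat c) := ⟨fun _ _ _ => trans⟩

theorem flatten_replicate (c : ℕ) (w : List α) {n : ℕ} (hn : n ≠ 0) :
    IsSpacedConcat c w (List.replicate n w).flatten := by
  induction n, Nat.one_le_iff_ne_zero.mpr hn using Nat.le_induction with
  | base => simpa using refl
  | succ n hn' ih => exact cons (s := []) (Nat.zero_le c) (ih (by omega))

theorem isPrefix (h : IsSpacedConcat c w v) : w <+: v := by
  cases h with
  | refl => exact List.prefix_rfl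
  | cons => exact List.prefix_append ..

end IsSpacedConcat

theorem infix_or_infix_of_infix_append (hw : w <+: v) (hu : u <:+: s ++ v)
    (hlen : s.length + w.length ≤ u.length) : u <:+: v ∨ w <:+: u := by
  obtain ⟨p, q, h⟩ := hu
  rw [List.append_assoc, List.append_eq_append_iff] at h
  obtain ⟨r, rfl, h⟩ | ⟨r, rfl, rfl⟩ := h
  · right
    obtain ⟨t, rfl, rfl⟩ | ⟨t, rfl, rfl⟩ := List.append_eq_append_iff.mp h
    · have hnil : w = [] := List.length_eq_zero_iff.mp (by simp at hlen; omega)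
      exact hnil ▸ List.nil_infix
    · have hwt : w <+: t :=
        List.prefix_of_prefix_length_le hw (List.prefix_append ..) (by simp at hlen; omega)
      exact hwt.isInfix.trans (List.suffix_append ..).isInfix
  · exact .inl (List.append_assoc r u q ▸ List.infix_append r u q)

theorem IsSpacedConcat.infix_of_infix (h : IsSpacedConcat c w v) (hu : u <:+: v)
    (hlen : 2 * w.length + c ≤ u.length) : w <:+: u := by
  induction h with
  | refl => exact (hu.eq_of_length_le (by omega)).symm ▸ List.infix_rfl
  | cons hs hv ih =>
    rw [← List.append_assoc] at hu
    have hsplit := infix_or_infix_of_infix_append hv.isPrefix hu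
      (by rw [List.length_append]; omega)
    exact hsplit.elim ih id

theorem isUniformlyRecurrent_range {W : ℕ → List α}
    (hW : ∀ k, IsSpacedConcat c (W k) (W (k + 1))) : IsUniformlyRecurrent (Set.range W) := by
  have hmono {k n : ℕ} (hkn : k ≤ n) : IsSpacedConcat c (W k) (W n) :=
    Nat.rel_of_forall_rel_succ_of_le _ hW hkn
  rintro _ ⟨k, rfl⟩
  refine ⟨2 * (W k).length + c, ?_⟩
  rintro _ ⟨n, rfl⟩ u hu hlen
  have hnk : W n <:+: W (max k n) := (hmono (le_max_right k n)).isPrefix.isInfix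
  exact (hmono (le_max_left k n)).infix_of_infix (hu.trans hnk) hlen

end SpacedConcat

theorem OccursAt.isInfix {w v : List ℕ} {p : ℕ} (h : OccursAt w v p) : w <:+: v :=
  h.2 ▸ (List.take_prefix ..).isInfix.trans (List.drop_suffix ..).isInfix

theorem InX.mem_subshiftOf {b a : ℕ} {x : ℤ → ℕ} (hx : InX b a x) :
    x ∈ subshiftOf (Set.range (Bword b a)) := by
  intro m l
  obtain ⟨k, p, h⟩ := hx m l
  exact ⟨Bword b a k, Set.mem_range_self k, h.isInfix⟩

theorem isSpacedConcat_bword_succ {b a : ℕ} (ha : 0 < a) (hab : a < b) (k : ℕ) :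
    IsSpacedConcat 1 (Bword b a k) (Bword b a (k + 1)) := by
  have hpow : 0 < b ^ k := Nat.pow_pos (ha.trans hab)
  have hleft := IsSpacedConcat.flatten_replicate 1 (Bword b a k) (Nat.mul_pos ha hpow).ne'
  have hright := IsSpacedConcat.flatten_replicate 1 (Bword b a k)
    (Nat.mul_pos (Nat.sub_pos_of_lt hab) hpow).ne'
  rw [Bword, List.append_assoc]
  exact hleft.append_spacer_append (List.length_singleton ..).le hright

/-- the subshift `(X, σ)` is minimal: every two-sided orbit is dense in `X`. -/
theorem subshift_minimal (b a : ℕ) (hb : 2 ≤ b) (ha1 : 1 ≤ a) (ha2 : a ≤ b - 1)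
    (x : ℤ → ℕ) (hx : InX b a x) :
    {y | InX b a y} ⊆ closure {y | ∃ n : ℤ, y = fun m => x (m + n)} := by
  intro y hy
  have hrec : IsUniformlyRecurrent (Set.range (Bword b a)) :=
    isUniformlyRecurrent_range (isSpacedConcat_bword_succ ha1 (by omega))
  exact hrec.mem_closure_orbit hx.mem_subshiftOf hy.mem_subshiftOf
end
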